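/- Let E be a collection of pairwise hom-orthogonal bricks over Λ and let T = ⋁{Filt(Gen(M)) : M ∈ E} in tors Λ. Then for each module M ∈ E: (1) there is a torsion class S covered by T such that T = Filt(S ∪ {M}); (2) M is a minimal extending module for S; and (3) S contains every module in E \ {M}. -/

import Mathlib

/-!
Common definitions: the category `mod Λ` of finite(-dimensional) left `Λ`-modules,
torsion(-free) classes, filtration closures, bricks, minimal (co-)extending modules,
and the lattice-theoretic notions for `tors Λ` (ordered by containment).
-/

/-- A bundled (left) `Λ`-module with carrier in `Type`. -/
structure Mdl (Λ : Type) [Ring Λ] : Type 1 where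
  carrier : Type
  [isAddCommGroup : AddCommGroup carrier]
  [isModule : Module Λ carrier]

attribute [instance] Mdl.isAddCommGroup Mdl.isModule

instance {Λ : Type} [Ring Λ] : CoeSort (Mdl Λ) Type :=
  ⟨Mdl.carrier⟩

variable (Λ : Type) [Ring Λ]

/-- Bundle a module. -/
def Mdl.of (X : Type) [AddCommGroup X] [Module Λ X] : Mdl Λ :=
  { carrier := X }

/-- `M` and `N` are isomorphic `Λ`-modules. -/
def MIso (M N : Mdl Λ) : Prop :=
  Nonempty (M.carrier ≃ₗ[Λ] N.carrier)

/-- `N` is a factor (quotient) module of `M`. -/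
def IsFactor (M N : Mdl Λ) : Prop :=
  ∃ f : M.carrier →ₗ[Λ] N.carrier, Function.Surjective f

/-- `N` is a proper factor of `M` (a quotient by a nonzero submodule). -/
def IsProperFactor (M N : Mdl Λ) : Prop :=
  ∃ f : M.carrier →ₗ[Λ] N.carrier, Function.Surjective f ∧ ¬ Function.Injective f

/-- `N` is (isomorphic to) a submodule of `M`. -/
def IsSubmoduleOf (N M : Mdl Λ) : Prop :=
  ∃ f : N.carrier →ₗ[Λ] M.carrier, Function.Injective f

/-- `N` is (isomorphic to) a proper submodule of `M`. -/
def IsProperSubmoduleOf (N M : Mdl Λ) : Prop :=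
  ∃ f : N.carrier →ₗ[Λ] M.carrier, Function.Injective f ∧ ¬ Function.Surjective f

/-- `D` is (isomorphic to) a direct summand of `N`. -/
def IsSummand (D N : Mdl Λ) : Prop :=
  ∃ (i : D.carrier →ₗ[Λ] N.carrier) (p : N.carrier →ₗ[Λ] D.carrier),
    p.comp i = LinearMap.id

/-- `0 → A --f--> M --g--> B → 0` is a short exact sequence. -/
def IsSES {A M B : Mdl Λ} (f : A.carrier →ₗ[Λ] M.carrier)
    (g : M.carrier →ₗ[Λ] B.carrier) : Prop :=
  Function.Injective f ∧ Function.Surjective g ∧ LinearMap.range f = LinearMap.ker g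

/-- The short exact sequence `0 → A --f--> M --g--> B → 0` splits. -/
def SplitsSES {A M B : Mdl Λ} (_f : A.carrier →ₗ[Λ] M.carrier)
    (g : M.carrier →ₗ[Λ] B.carrier) : Prop :=
  ∃ s : B.carrier →ₗ[Λ] M.carrier, g.comp s = LinearMap.id

/-- `M` is an extension of `B` by `A`, i.e. there is a s.e.s. `0 → A → M → B → 0`. -/
def ExtOf (M A B : Mdl Λ) : Prop :=
  ∃ (f : A.carrier →ₗ[Λ] M.carrier) (g : M.carrier →ₗ[Λ] B.carrier), IsSES Λ f g

/-- A torsion class in `mod Λ`: a class of finite(-dimensional) modules containing `0`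
and closed under isomorphisms, factor modules and extensions. -/
structure IsTorsionClass (T : Set (Mdl Λ)) : Prop where
  fin : ∀ M ∈ T, Module.Finite Λ M.carrier
  zero_mem : ∀ M : Mdl Λ, Subsingleton M.carrier → M ∈ T
  iso_closed : ∀ M ∈ T, ∀ N : Mdl Λ, MIso Λ M N → N ∈ T
  factor_closed : ∀ M ∈ T, ∀ N : Mdl Λ, IsFactor Λ M N → N ∈ T
  ext_closed : ∀ A ∈ T, ∀ B ∈ T, ∀ M : Mdl Λ, ExtOf Λ M A B → M ∈ T

/-- A torsion-free class in `mod Λ`: a class of finite(-dimensional) modules containing `0`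
and closed under isomorphisms, submodules and extensions. -/
structure IsTorsionFreeClass (F : Set (Mdl Λ)) : Prop where
  fin : ∀ M ∈ F, Module.Finite Λ M.carrier
  zero_mem : ∀ M : Mdl Λ, Subsingleton M.carrier → M ∈ F
  iso_closed : ∀ M ∈ F, ∀ N : Mdl Λ, MIso Λ M N → N ∈ F
  sub_closed : ∀ M ∈ F, ∀ N : Mdl Λ, IsSubmoduleOf Λ N M → N ∈ F
  ext_closed : ∀ A ∈ F, ∀ B ∈ F, ∀ M : Mdl Λ, ExtOf Λ M A B → M ∈ F

/-- `Filt S M`: `M` admits a filtration `0 = M₀ ⊆ M₁ ⊆ ⋯ ⊆ M_l = M` whose successive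
quotients are isomorphic to modules in `S`. -/
inductive Filt (S : Set (Mdl Λ)) : Mdl Λ → Prop
  | of_subsingleton (M : Mdl Λ) (h : Subsingleton M.carrier) : Filt S M
  | step (M : Mdl Λ) (N : Submodule Λ M.carrier) (X : Mdl Λ) (hX : X ∈ S)
      (hN : Filt S (Mdl.of Λ N)) (e : Nonempty ((M.carrier ⧸ N) ≃ₗ[Λ] X.carrier)) :
      Filt S M

/-- The filtration closure `Filt(S)` as a set of modules. -/
def FiltSet (S : Set (Mdl Λ)) : Set (Mdl Λ) := {M | Filt Λ S M}

/-- `Gen(M)`: the class of factor modules of finite direct sums of copies of `M`. -/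
def GenSet (M : Mdl Λ) : Set (Mdl Λ) :=
  {N | ∃ (n : ℕ) (f : (Fin n → M.carrier) →ₗ[Λ] N.carrier), Function.Surjective f}

/-- `T^⊥ = {X ∈ mod Λ : Hom_Λ(N, X) = 0 for all N ∈ T}`. -/
def Perp (T : Set (Mdl Λ)) : Set (Mdl Λ) :=
  {X | Module.Finite Λ X.carrier ∧ ∀ N ∈ T, ∀ f : N.carrier →ₗ[Λ] X.carrier, f = 0}

/-- A brick: a module (in `mod Λ`) whose endomorphism ring is a division ring,
i.e. it is nonzero and every nonzero endomorphism is invertible. -/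
def IsBrick (M : Mdl Λ) : Prop :=
  Module.Finite Λ M.carrier ∧ Nontrivial M.carrier ∧
    ∀ f : M.carrier →ₗ[Λ] M.carrier, f ≠ 0 → Function.Bijective f

/-- An indecomposable module: nonzero, and not the direct sum of two nonzero submodules. -/
def Indec (M : Mdl Λ) : Prop :=
  Nontrivial M.carrier ∧
    ∀ p q : Submodule Λ M.carrier, IsCompl p q → p = ⊥ ∨ q = ⊥

/-- `M` is a minimal extending module for the torsion class `T`:
(P1) every proper factor of `M` is in `T`;
(P2) if `0 → M → X → N → 0` is non-split exact with `N ∈ T`, then `X ∈ T`;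
(P3) `Hom_Λ(T, M) = 0`. -/
structure IsMinExt (T : Set (Mdl Λ)) (M : Mdl Λ) : Prop where
  fin : Module.Finite Λ M.carrier
  p1 : ∀ N : Mdl Λ, IsProperFactor Λ M N → N ∈ T
  p2 : ∀ (X N : Mdl Λ) (f : M.carrier →ₗ[Λ] X.carrier) (g : X.carrier →ₗ[Λ] N.carrier),
      IsSES Λ f g → ¬ SplitsSES Λ f g → N ∈ T → X ∈ T
  p3 : ∀ N ∈ T, ∀ f : N.carrier →ₗ[Λ] M.carrier, f = 0

/-- `M` is a minimal co-extending module for the torsion-free class `F`: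
(P1') every proper submodule of `M` is in `F`;
(P2') if `0 → F' → X → M → 0` is non-split exact with `F' ∈ F`, then `X ∈ F`;
(P3') `Hom_Λ(M, F) = 0`. -/
structure IsMinCoExt (F : Set (Mdl Λ)) (M : Mdl Λ) : Prop where
  fin : Module.Finite Λ M.carrier
  p1 : ∀ N : Mdl Λ, IsProperSubmoduleOf Λ N M → N ∈ F
  p2 : ∀ (X F' : Mdl Λ) (f : F'.carrier →ₗ[Λ] X.carrier) (g : X.carrier →ₗ[Λ] M.carrier),
      IsSES Λ f g → ¬ SplitsSES Λ f g → F' ∈ F → X ∈ F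
  p3 : ∀ F' ∈ F, ∀ f : M.carrier →ₗ[Λ] F'.carrier, f = 0

/-- `T'` covers `T` in the lattice `tors Λ` of torsion classes ordered by containment. -/
def TorsCovers (T' T : Set (Mdl Λ)) : Prop :=
  IsTorsionClass Λ T' ∧ IsTorsionClass Λ T ∧ T ⊂ T' ∧
    ∀ Y : Set (Mdl Λ), IsTorsionClass Λ Y → T ⊂ Y → Y ⊆ T' → Y = T'

/-- `F'` covers `F` in the lattice `torf Λ` of torsion-free classes ordered by containment. -/
def TorfCovers (F' F : Set (Mdl Λ)) : Prop :=
  IsTorsionFreeClass Λ F' ∧ IsTorsionFreeClass Λ F ∧ F ⊂ F' ∧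
    ∀ Y : Set (Mdl Λ), IsTorsionFreeClass Λ Y → F ⊂ Y → Y ⊆ F' → Y = F'

/-- The join `⋁ A` of a family of torsion classes in `tors Λ`: the smallest torsion
class containing all members of `A`. -/
def TorsJoin (A : Set (Set (Mdl Λ))) : Set (Mdl Λ) :=
  ⋂₀ {T : Set (Mdl Λ) | IsTorsionClass Λ T ∧ ∀ S ∈ A, S ⊆ T}

/-- A completely join-irreducible element of `tors Λ`: a torsion class `T` such that
`T ∈ A` whenever `A` is a set of torsion classes with `⋁ A = T`. -/
def CompletelyJoinIrred (T : Set (Mdl Λ)) : Prop :=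
  IsTorsionClass Λ T ∧
    ∀ A : Set (Set (Mdl Λ)), (∀ S ∈ A, IsTorsionClass Λ S) → TorsJoin Λ A = T → T ∈ A

/-- The join representation `⋁ A` is irredundant in `tors Λ`:
every proper subset has strictly smaller join. -/
def TorsIrredundant (A : Set (Set (Mdl Λ))) : Prop :=
  ∀ B : Set (Set (Mdl Λ)), B ⊂ A → TorsJoin Λ B ⊂ TorsJoin Λ A

/-- `A` is the canonical join representation of its join in `tors Λ` (equivalently, a face
of the canonical join complex `Γ(tors Λ)`): `⋁ A` is irredundant, and `A ≪ B` for every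
irredundant join representation `⋁ B` of the same element. -/
def TorsCJR (A : Set (Set (Mdl Λ))) : Prop :=
  (∀ S ∈ A, IsTorsionClass Λ S) ∧ TorsIrredundant Λ A ∧
    ∀ B : Set (Set (Mdl Λ)), (∀ S ∈ B, IsTorsionClass Λ S) →
      TorsJoin Λ B = TorsJoin Λ A → TorsIrredundant Λ B → ∀ a ∈ A, ∃ b ∈ B, a ⊆ b

/-- `M` and `N` are hom-orthogonal: `Hom_Λ(M, N) = 0` and `Hom_Λ(N, M) = 0`. -/
def HomOrthogonal (M N : Mdl Λ) : Prop :=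
  (∀ f : M.carrier →ₗ[Λ] N.carrier, f = 0) ∧ ∀ f : N.carrier →ₗ[Λ] M.carrier, f = 0

/-!
`S` is the class of all `X ∈ T` with `Hom(X, M) = 0`. The modules all of whose maps to `M` are zero
or surjective form a torsion class; it contains every module of `E`, hence all of `T`. So any
`X ∈ T \ S` maps onto `M`, and a torsion class strictly above `S` and below `T` contains `M`.
On the other hand, as every proper factor of the brick `M` lies in `S`, the class `Filt(S ∪ {M})` is
a torsion class; it contains `E`, hence it is all of `T`.
-/

section

variable {Λ}

theorem IsSES.exact {A X B : Mdl Λ} {f : A.carrier →ₗ[Λ] X.carrier}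
    {g : X.carrier →ₗ[Λ] B.carrier} (h : IsSES Λ f g) : Function.Exact f g :=
  LinearMap.exact_iff.2 h.2.2.symm

theorem IsSES.exists_eq_comp {A X B M : Mdl Λ} {f : A.carrier →ₗ[Λ] X.carrier}
    {g : X.carrier →ₗ[Λ] B.carrier} (h : IsSES Λ f g) {u : X.carrier →ₗ[Λ] M.carrier}
    (hu : u.comp f = 0) : ∃ v : B.carrier →ₗ[Λ] M.carrier, u = v.comp g := by
  have hfu : LinearMap.range f ≤ LinearMap.ker u := LinearMap.range_le_ker_iff.2 hu
  refine ⟨((LinearMap.range f).liftQ u hfu).comp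
    (h.exact.linearEquivOfSurjective h.2.1).symm.toLinearMap, ?_⟩
  ext x
  simp

theorem IsSES.splitsSES_of_retraction {A X B : Mdl Λ} {f : A.carrier →ₗ[Λ] X.carrier}
    {g : X.carrier →ₗ[Λ] B.carrier} (h : IsSES Λ f g) {r : X.carrier →ₗ[Λ] A.carrier}
    (hr : r.comp f = LinearMap.id) : SplitsSES Λ f g :=
  ((h.exact.split_tfae h.1 h.2.1).out 0 1 rfl rfl).2 ⟨r, hr⟩

theorem extOf_of_exact {A X B : Type} [AddCommGroup A] [Module Λ A] [AddCommGroup X] [Module Λ X]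
    [AddCommGroup B] [Module Λ B] {f : A →ₗ[Λ] X} {g : X →ₗ[Λ] B} (hf : Function.Injective f)
    (hfg : Function.Exact f g) (hg : Function.Surjective g) :
    ExtOf Λ (Mdl.of Λ X) (Mdl.of Λ A) (Mdl.of Λ B) :=
  ⟨f, g, hf, hg, (LinearMap.exact_iff.1 hfg).symm⟩

theorem extOf_quotient (M : Mdl Λ) (N : Submodule Λ M.carrier) :
    ExtOf Λ M (Mdl.of Λ N) (Mdl.of Λ (M.carrier ⧸ N)) :=
  extOf_of_exact N.injective_subtype (LinearMap.exact_subtype_mkQ N) N.mkQ_surjective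

theorem IsSES.extOf_comap {A X B : Mdl Λ} {f : A.carrier →ₗ[Λ] X.carrier}
    {g : X.carrier →ₗ[Λ] B.carrier} (h : IsSES Λ f g) (N : Submodule Λ B.carrier) :
    ExtOf Λ (Mdl.of Λ (N.comap g)) A (Mdl.of Λ N) := by
  have hfN : ∀ a, f a ∈ N.comap g := fun a => by
    simp only [Submodule.mem_comap, h.exact.apply_apply_eq_zero, zero_mem]
  refine extOf_of_exact (f := f.codRestrict (N.comap g) hfN)
    (g := g.restrict (p := N.comap g) (q := N) fun _ hx => hx)
    (fun a b hab => h.1 (congrArg Subtype.val hab)) (fun x => ?_) ?_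
  · refine Subtype.ext_iff.trans ((h.exact x.1).trans ?_)
    exact exists_congr fun a => (Subtype.ext_iff (a1 := f.codRestrict (N.comap g) hfN a)).symm
  · rintro ⟨y, hy⟩
    obtain ⟨x, rfl⟩ := h.2.1 y
    exact ⟨⟨x, hy⟩, rfl⟩

theorem IsTorsionClass.of_factor_closed_of_ext_closed {T : Set (Mdl Λ)}
    (fin : ∀ M ∈ T, Module.Finite Λ M.carrier)
    (zero_mem : ∀ M : Mdl Λ, Subsingleton M.carrier → M ∈ T)
    (factor_closed : ∀ M ∈ T, ∀ N : Mdl Λ, IsFactor Λ M N → N ∈ T)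
    (ext_closed : ∀ A ∈ T, ∀ B ∈ T, ∀ M : Mdl Λ, ExtOf Λ M A B → M ∈ T) :
    IsTorsionClass Λ T where
  fin := fin
  zero_mem := zero_mem
  iso_closed := fun M hM N ⟨e⟩ => factor_closed M hM N ⟨e.toLinearMap, e.surjective⟩
  factor_closed := factor_closed
  ext_closed := ext_closed

theorem isTorsionClass_setOf_finite :
    IsTorsionClass Λ {M : Mdl Λ | Module.Finite Λ M.carrier} := by
  refine .of_factor_closed_of_ext_closed (fun _ hM => hM) ?_ ?_ ?_
  · rintro M (hM : Subsingleton M.carrier)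
    exact inferInstanceAs (Module.Finite Λ M.carrier)
  · rintro M (hM : Module.Finite Λ M.carrier) N ⟨f, hf⟩
    exact Module.Finite.of_surjective f hf
  · rintro A (hA : Module.Finite Λ A.carrier) B (hB : Module.Finite Λ B.carrier) M ⟨f, g, h⟩
    exact Module.Finite.of_exact h.exact h.2.1

theorem IsTorsionClass.sInter {𝒯 : Set (Set (Mdl Λ))} (hne : 𝒯.Nonempty)
    (h : ∀ T ∈ 𝒯, IsTorsionClass Λ T) : IsTorsionClass Λ (⋂₀ 𝒯) := by
  obtain ⟨T₀, hT₀⟩ := hne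
  exact .of_factor_closed_of_ext_closed (fun M hM => (h T₀ hT₀).fin M (hM T₀ hT₀))
    (fun M hM T hT => (h T hT).zero_mem M hM)
    (fun M hM N hMN T hT => (h T hT).factor_closed M (hM T hT) N hMN)
    (fun A hA B hB M hM T hT => (h T hT).ext_closed A (hA T hT) B (hB T hT) M hM)

theorem IsTorsionClass.inter {T T' : Set (Mdl Λ)} (hT : IsTorsionClass Λ T)
    (hT' : IsTorsionClass Λ T') : IsTorsionClass Λ (T ∩ T') :=
  Set.sInter_pair T T' ▸ sInter (Set.insert_nonempty T {T'}) (by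
    rintro _ (rfl | rfl)
    exacts [hT, hT'])

theorem IsTorsionClass.pow_mem {T : Set (Mdl Λ)} (hT : IsTorsionClass Λ T) {M : Mdl Λ}
    (hM : M ∈ T) (n : ℕ) : Mdl.of Λ (Fin n → M.carrier) ∈ T := by
  induction n with
  | zero => exact hT.zero_mem _ (inferInstanceAs (Subsingleton (Fin 0 → M.carrier)))
  | succ n ih =>
    have hext : ExtOf Λ (Mdl.of Λ (M.carrier × (Fin n → M.carrier))) M
        (Mdl.of Λ (Fin n → M.carrier)) :=
      extOf_of_exact LinearMap.inl_injective Function.Exact.inl_snd LinearMap.snd_surjective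
    exact hT.iso_closed _ (hT.ext_closed M hM _ ih _ hext) _
      ⟨Fin.consLinearEquiv Λ fun _ => M.carrier⟩

theorem subset_filtSet (S : Set (Mdl Λ)) : S ⊆ FiltSet Λ S := fun M hM =>
  Filt.step M ⊥ M hM
    (Filt.of_subsingleton _ (inferInstanceAs (Subsingleton (⊥ : Submodule Λ M.carrier))))
    ⟨Submodule.quotEquivOfEqBot ⊥ rfl⟩

theorem Filt.congr {S : Set (Mdl Λ)} {M M' : Mdl Λ} (h : Filt Λ S M)
    (e : M.carrier ≃ₗ[Λ] M'.carrier) : Filt Λ S M' := by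
  induction h generalizing M' with
  | of_subsingleton M hM => exact .of_subsingleton M' e.symm.injective.subsingleton
  | step M N X hX _ eX ih =>
    obtain ⟨eX⟩ := eX
    exact .step M' (N.map e.toLinearMap) X hX (ih (e.submoduleMap N))
      ⟨(Submodule.Quotient.equiv N (N.map e.toLinearMap) e rfl).symm.trans eX⟩

theorem Filt.of_extOf {S : Set (Mdl Λ)} {A X B : Mdl Λ} (hA : Filt Λ S A) (hB : Filt Λ S B)
    (h : ExtOf Λ X A B) : Filt Λ S X := by
  induction hB generalizing X with
  | of_subsingleton B hB =>
    obtain ⟨f, g, h⟩ := h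
    have hf : Function.Surjective f :=
      (LinearMap.surjective_iff_eq_zero_of_exact h.exact).2 (LinearMap.ext fun _ =>
        Subsingleton.elim _ _)
    exact hA.congr (LinearEquiv.ofBijective f ⟨h.1, hf⟩)
  | step B N Z hZ _ e ih =>
    obtain ⟨e⟩ := e
    obtain ⟨f, g, h⟩ := h
    have hker : N.comap g = LinearMap.ker (N.mkQ.comp g) := by
      rw [LinearMap.ker_comp, Submodule.ker_mkQ]
    have hsurj : Function.Surjective (N.mkQ.comp g) := N.mkQ_surjective.comp h.2.1
    exact .step X (N.comap g) Z hZ (ih (h.extOf_comap N))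
      ⟨(Submodule.quotEquivOfEq _ _ hker).trans
        (((N.mkQ.comp g).quotKerEquivOfSurjective hsurj).trans e)⟩

theorem Filt.of_isFactor {S : Set (Mdl Λ)}
    (hS : ∀ X ∈ S, ∀ Z : Mdl Λ, IsFactor Λ X Z → Filt Λ S Z) {M M' : Mdl Λ} (h : Filt Λ S M)
    (hM' : IsFactor Λ M M') : Filt Λ S M' := by
  induction h generalizing M' with
  | of_subsingleton M hM =>
    obtain ⟨f, hf⟩ := hM'
    exact .of_subsingleton M' hf.subsingleton
  | step M N X hX _ e ih =>
    obtain ⟨f, hf⟩ := hM'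
    obtain ⟨e⟩ := e
    have hsub : Filt Λ S (Mdl.of Λ (N.map f)) :=
      ih ⟨f.submoduleMap N, f.submoduleMap_surjective N⟩
    have hquot : IsFactor Λ X (Mdl.of Λ (M'.carrier ⧸ N.map f)) := by
      have hf' : Function.Surjective (N.mapQ (N.map f) f (Submodule.le_comap_map f N)) :=
        .of_comp (g := N.mkQ) ((N.map f).mkQ_surjective.comp hf)
      exact ⟨(N.mapQ (N.map f) f (Submodule.le_comap_map f N)).comp e.symm.toLinearMap,
        hf'.comp e.symm.surjective⟩
    exact hsub.of_extOf (hS X hX _ hquot) (extOf_quotient M' (N.map f))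

theorem IsTorsionClass.filtSet_subset {S T : Set (Mdl Λ)} (hT : IsTorsionClass Λ T) (hS : S ⊆ T) :
    FiltSet Λ S ⊆ T := by
  intro M hM
  induction hM with
  | of_subsingleton M hM => exact hT.zero_mem M hM
  | step M N X hX _ e ih =>
    obtain ⟨e⟩ := e
    have hquot : Mdl.of Λ (M.carrier ⧸ N) ∈ T := hT.iso_closed X (hS hX) _ ⟨e.symm⟩
    exact hT.ext_closed _ ih _ hquot M (extOf_quotient M N)

theorem isTorsionClass_filtSet {S : Set (Mdl Λ)} (hfin : ∀ X ∈ S, Module.Finite Λ X.carrier)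
    (hS : ∀ X ∈ S, ∀ Z : Mdl Λ, IsFactor Λ X Z → Filt Λ S Z) : IsTorsionClass Λ (FiltSet Λ S) :=
  .of_factor_closed_of_ext_closed
    (fun _ hM => isTorsionClass_setOf_finite.filtSet_subset hfin hM)
    (fun M hM => .of_subsingleton M hM)
    (fun _ hM _ hMN => hM.of_isFactor hS hMN)
    (fun _ hA _ hB _ h => hA.of_extOf hB h)

theorem IsTorsionClass.filtSet_insert {S : Set (Mdl Λ)} (hS : IsTorsionClass Λ S) {M : Mdl Λ}
    (hM : Module.Finite Λ M.carrier) (hfactor : ∀ N : Mdl Λ, IsProperFactor Λ M N → N ∈ S) :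
    IsTorsionClass Λ (FiltSet Λ (insert M S)) := by
  have hself := subset_filtSet (insert M S)
  refine isTorsionClass_filtSet (Set.forall_mem_insert.2 ⟨hM, hS.fin⟩)
    (Set.forall_mem_insert.2 ⟨?_, fun X hX Z hZ => hself (.inr (hS.factor_closed X hX Z hZ))⟩)
  rintro Z ⟨f, hf⟩
  by_cases hinj : Function.Injective f
  · exact (hself (.inl rfl) : Filt Λ _ M).congr (LinearEquiv.ofBijective f ⟨hinj, hf⟩)
  · exact hself (.inr (hfactor Z ⟨f, hf, hinj⟩))

theorem mem_genSet_self (M : Mdl Λ) : M ∈ GenSet Λ M :=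
  ⟨1, LinearMap.proj 0, LinearMap.proj_surjective 0⟩

theorem IsTorsionClass.filtSet_genSet_subset_iff {T : Set (Mdl Λ)} (hT : IsTorsionClass Λ T)
    {M : Mdl Λ} : FiltSet Λ (GenSet Λ M) ⊆ T ↔ M ∈ T := by
  refine ⟨fun h => h (subset_filtSet _ (mem_genSet_self M)), fun hM => hT.filtSet_subset ?_⟩
  rintro N ⟨n, f, hf⟩
  exact hT.factor_closed _ (hT.pow_mem hM n) N ⟨f, hf⟩

theorem torsJoin_filtSet_genSet (E : Set (Mdl Λ)) :
    TorsJoin Λ ((fun M => FiltSet Λ (GenSet Λ M)) '' E) =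
      ⋂₀ {T | IsTorsionClass Λ T ∧ E ⊆ T} := by
  refine congrArg Set.sInter (Set.ext fun T => and_congr_right fun hT => ?_)
  rw [Set.forall_mem_image]
  exact forall₂_congr fun M _ => hT.filtSet_genSet_subset_iff

theorem isLeast_torsJoin_filtSet_genSet {E : Set (Mdl Λ)}
    (hE : ∀ M ∈ E, Module.Finite Λ M.carrier) :
    IsLeast {T | IsTorsionClass Λ T ∧ E ⊆ T}
      (TorsJoin Λ ((fun M => FiltSet Λ (GenSet Λ M)) '' E)) := by
  rw [torsJoin_filtSet_genSet]
  have hne : {T | IsTorsionClass Λ T ∧ E ⊆ T}.Nonempty := ⟨_, isTorsionClass_setOf_finite, hE⟩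
  exact ⟨⟨.sInter hne fun T hT => hT.1, Set.subset_sInter fun T hT => hT.2⟩,
    fun T hT => Set.sInter_subset_of_mem hT⟩

/-- The left perpendicular class `⊥M`: the finite modules without nonzero maps to `M`. It cuts the
class `S` of the theorem out of `T`. -/
def leftPerp (M : Mdl Λ) : Set (Mdl Λ) :=
  {X | Module.Finite Λ X.carrier ∧ ∀ u : X.carrier →ₗ[Λ] M.carrier, u = 0}

theorem isTorsionClass_leftPerp (M : Mdl Λ) : IsTorsionClass Λ (leftPerp M) := by
  refine .of_factor_closed_of_ext_closed (fun X hX => hX.1) ?_ ?_ ?_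
  · intro X hX
    exact ⟨isTorsionClass_setOf_finite.zero_mem X hX, fun u => Subsingleton.elim u 0⟩
  · rintro X ⟨hfin, hX⟩ Y ⟨f, hf⟩
    refine ⟨Module.Finite.of_surjective f hf, fun u => (LinearMap.cancel_right hf).1 ?_⟩
    rw [hX (u.comp f), LinearMap.zero_comp]
  · intro A hA B hB X hX
    refine ⟨isTorsionClass_setOf_finite.ext_closed A hA.1 B hB.1 X hX, fun u => ?_⟩
    obtain ⟨f, g, h⟩ := hX
    obtain ⟨v, rfl⟩ := h.exists_eq_comp (hA.2 (u.comp f))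
    rw [hB.2 v, LinearMap.zero_comp]

/-- The finite modules all of whose nonzero maps to `M` are surjective. They form a torsion class,
which is how information about maps to the brick `M` passes from `E` to `T`. -/
def zeroOrSurjective (M : Mdl Λ) : Set (Mdl Λ) :=
  {X | Module.Finite Λ X.carrier ∧
    ∀ u : X.carrier →ₗ[Λ] M.carrier, u = 0 ∨ Function.Surjective u}

theorem leftPerp_subset_zeroOrSurjective (M : Mdl Λ) : leftPerp M ⊆ zeroOrSurjective M :=
  fun _ hX => ⟨hX.1, fun u => .inl (hX.2 u)⟩

theorem isTorsionClass_zeroOrSurjective (M : Mdl Λ) : IsTorsionClass Λ (zeroOrSurjective M) := by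
  refine .of_factor_closed_of_ext_closed (fun X hX => hX.1) ?_ ?_ ?_
  · intro X hX
    exact leftPerp_subset_zeroOrSurjective M ((isTorsionClass_leftPerp M).zero_mem X hX)
  · rintro X ⟨hfin, hX⟩ Y ⟨f, hf⟩
    refine ⟨Module.Finite.of_surjective f hf, fun u => (hX (u.comp f)).imp (fun h => ?_) .of_comp⟩
    rwa [← LinearMap.zero_comp f, LinearMap.cancel_right hf] at h
  · intro A hA B hB X hX
    refine ⟨isTorsionClass_setOf_finite.ext_closed A hA.1 B hB.1 X hX, fun u => ?_⟩
    obtain ⟨f, g, h⟩ := hX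
    rcases hA.2 (u.comp f) with huf | huf
    · obtain ⟨v, rfl⟩ := h.exists_eq_comp huf
      refine (hB.2 v).imp (fun hv => ?_) fun hv => hv.comp h.2.1
      rw [hv, LinearMap.zero_comp]
    · exact .inr (.of_comp huf)

theorem IsBrick.mem_zeroOrSurjective {M : Mdl Λ} (hM : IsBrick Λ M) : M ∈ zeroOrSurjective M :=
  ⟨hM.1, fun u => or_iff_not_imp_left.2 fun hu => (hM.2.2 u hu).2⟩

theorem IsBrick.mem_leftPerp_of_isProperFactor {M N : Mdl Λ} (hM : IsBrick Λ M)
    (hN : IsProperFactor Λ M N) : N ∈ leftPerp M := by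
  obtain ⟨f, hf, hinj⟩ := hN
  have hfin := hM.1
  refine ⟨Module.Finite.of_surjective f hf, fun u => ?_⟩
  have huf : u.comp f = 0 := by
    by_contra hne
    exact hinj (.of_comp (hM.2.2 _ hne).1)
  rwa [← LinearMap.zero_comp f, LinearMap.cancel_right hf] at huf

theorem IsBrick.splitsSES_of_comp_ne_zero {M X N : Mdl Λ} (hM : IsBrick Λ M)
    {f : M.carrier →ₗ[Λ] X.carrier} {g : X.carrier →ₗ[Λ] N.carrier} (h : IsSES Λ f g)
    {u : X.carrier →ₗ[Λ] M.carrier} (hu : u.comp f ≠ 0) : SplitsSES Λ f g := by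
  let e := LinearEquiv.ofBijective (u.comp f) (hM.2.2 _ hu)
  exact h.splitsSES_of_retraction (r := e.symm.toLinearMap.comp u)
    (LinearMap.ext e.symm_apply_apply)

theorem IsBrick.isMinExt {T : Set (Mdl Λ)} (hT : IsTorsionClass Λ T) {M : Mdl Λ}
    (hM : IsBrick Λ M) (hMT : M ∈ T) : IsMinExt Λ (T ∩ leftPerp M) M where
  fin := hM.1
  p1 N hN := ⟨hT.factor_closed M hMT N (hN.imp fun _ hf => hf.1),
    hM.mem_leftPerp_of_isProperFactor hN⟩
  p2 X N f g h hsplit hN := by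
    have hX : X ∈ T := hT.ext_closed M hMT N hN.1 X ⟨f, g, h⟩
    refine ⟨hX, hT.fin X hX, fun u => ?_⟩
    have huf : u.comp f = 0 := not_not.1 fun hne => hsplit (hM.splitsSES_of_comp_ne_zero h hne)
    obtain ⟨v, rfl⟩ := h.exists_eq_comp huf
    rw [hN.2.2 v, LinearMap.zero_comp]
  p3 _ hN := hN.2.2

theorem not_mem_leftPerp_self (M : Mdl Λ) [Nontrivial M.carrier] : M ∉ leftPerp M := fun hM =>
  one_ne_zero (hM.2 (1 : Module.End Λ M.carrier))

theorem torsCovers_inter_leftPerp {T : Set (Mdl Λ)} (hT : IsTorsionClass Λ T) {M : Mdl Λ}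
    [Nontrivial M.carrier] (hMT : M ∈ T) (hTM : T ⊆ zeroOrSurjective M)
    (hfilt : T ⊆ FiltSet Λ (insert M (T ∩ leftPerp M))) :
    TorsCovers Λ T (T ∩ leftPerp M) := by
  refine ⟨hT, hT.inter (isTorsionClass_leftPerp M), ⟨Set.inter_subset_left, fun h => ?_⟩, ?_⟩
  · exact not_mem_leftPerp_self M (h hMT).2
  · intro Y hY hSY hYT
    obtain ⟨X, hXY, hXS⟩ := Set.exists_of_ssubset hSY
    obtain ⟨u, hu⟩ : ∃ u : X.carrier →ₗ[Λ] M.carrier, u ≠ 0 := by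
      by_contra! hzero
      exact hXS ⟨hYT hXY, hY.fin X hXY, hzero⟩
    have hMY : M ∈ Y :=
      hY.factor_closed X hXY M ⟨u, ((hTM (hYT hXY)).2 u).resolve_left hu⟩
    exact hYT.antisymm (hfilt.trans (hY.filtSet_subset (Set.insert_subset hMY hSY.subset)))

theorem statement18_general {E : Set (Mdl Λ)} (hE : ∀ M' ∈ E, Module.Finite Λ M'.carrier)
    {M : Mdl Λ} (hM : M ∈ E) (hbrick : IsBrick Λ M)
    (hzero : ∀ M' ∈ E, M' ≠ M → ∀ u : M'.carrier →ₗ[Λ] M.carrier, u = 0) :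
    ∃ S : Set (Mdl Λ),
      TorsCovers Λ (TorsJoin Λ ((fun M' : Mdl Λ => FiltSet Λ (GenSet Λ M')) '' E)) S ∧
      TorsJoin Λ ((fun M' : Mdl Λ => FiltSet Λ (GenSet Λ M')) '' E) =
        FiltSet Λ (insert M S) ∧
      IsMinExt Λ S M ∧
      ∀ M' ∈ E, M' ≠ M → M' ∈ S := by
  obtain ⟨⟨hT, hET⟩, hleast⟩ := isLeast_torsJoin_filtSet_genSet hE
  set T := TorsJoin Λ ((fun M' : Mdl Λ => FiltSet Λ (GenSet Λ M')) '' E)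
  have := hbrick.2.1
  have hmin : IsMinExt Λ (T ∩ leftPerp M) M := hbrick.isMinExt hT (hET hM)
  have hperp : ∀ M' ∈ E, M' ≠ M → M' ∈ leftPerp M := fun M' hM' hne =>
    ⟨hE M' hM', hzero M' hM' hne⟩
  have hES : ∀ M' ∈ E, M' ≠ M → M' ∈ T ∩ leftPerp M := fun M' hM' hne =>
    ⟨hET hM', hperp M' hM' hne⟩
  have hTM : T ⊆ zeroOrSurjective M := by
    refine hleast ⟨isTorsionClass_zeroOrSurjective M, fun M' hM' => ?_⟩
    obtain rfl | hne := eq_or_ne M' M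
    · exact hbrick.mem_zeroOrSurjective
    · exact leftPerp_subset_zeroOrSurjective M (hperp M' hM' hne)
  have hfilt : T ⊆ FiltSet Λ (insert M (T ∩ leftPerp M)) :=
    hleast ⟨(hT.inter (isTorsionClass_leftPerp M)).filtSet_insert hbrick.1 hmin.p1,
      fun M' hM' => subset_filtSet _ (or_iff_not_imp_left.2 (hES M' hM'))⟩
  have hinsert : insert M (T ∩ leftPerp M) ⊆ T :=
    Set.insert_subset (hET hM) Set.inter_subset_left
  exact ⟨T ∩ leftPerp M, torsCovers_inter_leftPerp hT (hET hM) hTM hfilt,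
    hfilt.antisymm (hT.filtSet_subset hinsert), hmin, hES⟩

end

/-- Let `E` be a collection of pairwise hom-orthogonal bricks over `Λ`
and `T = ⋁ {Filt(Gen(M)) : M ∈ E}` in `tors Λ`.  Then for each `M ∈ E` there is a
torsion class `S` covered by `T` such that `T = Filt(S ∪ {M})`, `M` is a minimal
extending module for `S`, and `S` contains every module of `E \ {M}`. -/
theorem statement18 (k : Type) [Field k] (Λ : Type) [Ring Λ] [Algebra k Λ]
    [FiniteDimensional k Λ] (E : Set (Mdl Λ)) (hE : ∀ M ∈ E, IsBrick Λ M)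
    (horth : ∀ M ∈ E, ∀ M' ∈ E, M ≠ M' → HomOrthogonal Λ M M')
    (M : Mdl Λ) (hM : M ∈ E) :
    ∃ S : Set (Mdl Λ),
      TorsCovers Λ (TorsJoin Λ ((fun M' : Mdl Λ => FiltSet Λ (GenSet Λ M')) '' E)) S ∧
      TorsJoin Λ ((fun M' : Mdl Λ => FiltSet Λ (GenSet Λ M')) '' E) =
        FiltSet Λ (insert M S) ∧
      IsMinExt Λ S M ∧
      ∀ M' ∈ E, M' ≠ M → M' ∈ S := by
  exact statement18_general (fun M' hM' => (hE M' hM').1) hM (hE M hM)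
    fun M' hM' hne => (horth M' hM' M hM hne).1
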